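/- Let n ≥ 2, m > 1 and δ > 1/2. There exists a constant C > 0 such that for all λ ∈ ℝ, all η > 0, either sign ±, and every Schwartz function f on ℝⁿ, | Im ( |p′(D_x)| (λ ± iη − p(D_x))^{-1} f , f )_{L²(ℝⁿ)} | ≤ C ‖ ⟨x⟩^{δ} f ‖²_{L²(ℝⁿ)}, with C independent of λ, η and f. -/

import Mathlib

open MeasureTheory Real Complex RealInnerProductSpace

noncomputable section

/-- Fourier transform with convention `(2π)^(-n/2) ∫ e^(-ix·ξ) f(x) dx`. -/
def FT (n : ℕ) (f : EuclideanSpace ℝ (Fin n) → ℂ) (ξ : EuclideanSpace ℝ (Fin n)) : ℂ :=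
  ((2 * π) ^ (-(n : ℝ) / 2) : ℝ) •
    ∫ x : EuclideanSpace ℝ (Fin n), Complex.exp (-Complex.I * ((⟪x, ξ⟫ : ℝ) : ℂ)) * f x

/-- Inverse Fourier transform. -/
def IFT (n : ℕ) (F : EuclideanSpace ℝ (Fin n) → ℂ) (x : EuclideanSpace ℝ (Fin n)) : ℂ :=
  ((2 * π) ^ (-(n : ℝ) / 2) : ℝ) •
    ∫ ξ : EuclideanSpace ℝ (Fin n), Complex.exp (Complex.I * ((⟪x, ξ⟫ : ℝ) : ℂ)) * F ξ

/-- Fourier multiplier with symbol `q`: `q(D_x) f = IFT (q · FT f)`. -/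
def mult (n : ℕ) (q : EuclideanSpace ℝ (Fin n) → ℂ) (f : EuclideanSpace ℝ (Fin n) → ℂ) :
    EuclideanSpace ℝ (Fin n) → ℂ :=
  IFT n fun ξ => q ξ * FT n f ξ

/-! The imaginary part of the symbol `|∇p| (λ ± iη - p)⁻¹` is, up to sign, the Poisson kernel
`η / ((λ - p)² + η²)` times `|∇p|`, so by Parseval the quantity to bound is the integral of
`|f̂|²` against this weight. Near any direction there is an open convex cone on which `|∇p|` is at
most twice the derivative of `p` along a fixed unit vector `θ`; there `p` is monotone along the
lines parallel to `θ`, and the change of variables `s = p` shows that the weight has mass at most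
`2π` on each such line, uniformly in `λ` and `η`. The integral over the cone is therefore at most
`2π` times the integral over all lines parallel to `θ` of `sup |f̂|²` on the line. On a line `f̂` is
the one-dimensional Fourier transform in `x·θ` of the partial Fourier transform of `f` along `θ^⊥`,
so the Cauchy–Schwarz inequality with the weight `⟨x·θ⟩ ^ δ`, whose inverse is square integrable as
`2δ > 1`, and Plancherel on `θ^⊥` bound this by `‖⟨x⟩ ^ δ f‖²`. Finitely many cones cover the
punctured space. -/

open scoped ENNReal FourierTransform SchwartzMap InnerProductSpace

/-- `π` times the Poisson kernel of the upper half-plane at height `η`; up to sign it is the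
imaginary part of `(s ± iη)⁻¹`. -/
def halfPlanePoisson (η s : ℝ) : ℝ := η / (s ^ 2 + η ^ 2)

lemma halfPlanePoisson_nonneg {η : ℝ} (hη : 0 ≤ η) (s : ℝ) : 0 ≤ halfPlanePoisson η s := by
  unfold halfPlanePoisson
  positivity

lemma measurable_halfPlanePoisson (η : ℝ) : Measurable (halfPlanePoisson η) := by
  unfold halfPlanePoisson
  fun_prop

lemma abs_im_ofReal_mul_resolvent {ε : ℝ} (hε : ε = 1 ∨ ε = -1) {A η : ℝ} (hA : 0 ≤ A)
    (hη : 0 ≤ η) (lam p : ℝ) :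
    |((A : ℂ) * (((lam : ℂ) + (ε : ℂ) * (η : ℂ) * I) - (p : ℂ))⁻¹).im| =
      halfPlanePoisson η (lam - p) * A := by
  have hre : (((lam : ℂ) + (ε : ℂ) * (η : ℂ) * I) - (p : ℂ)).re = lam - p := by simp
  have him : (((lam : ℂ) + (ε : ℂ) * (η : ℂ) * I) - (p : ℂ)).im = ε * η := by simp
  have hε1 : |ε| = 1 := by rcases hε with rfl | rfl <;> simp
  have hε2 : ε * η * (ε * η) = η ^ 2 := by rcases hε with rfl | rfl <;> ring
  rw [im_ofReal_mul, inv_im, normSq_apply, hre, him, hε2, abs_mul, abs_div, abs_neg, abs_mul, hε1,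
    abs_of_nonneg hA, abs_of_nonneg hη, ← sq, abs_of_nonneg (by positivity), halfPlanePoisson]
  ring

lemma norm_resolvent_le {ε : ℝ} (hε : ε = 1 ∨ ε = -1) {η : ℝ} (hη : 0 < η) (lam p : ℝ) :
    ‖(((lam : ℂ) + (ε : ℂ) * (η : ℂ) * I) - (p : ℂ))⁻¹‖ ≤ η⁻¹ := by
  rw [norm_inv]
  gcongr
  calc η = |(((lam : ℂ) + (ε : ℂ) * (η : ℂ) * I) - (p : ℂ)).im| := by
        rcases hε with rfl | rfl <;> simp [abs_of_pos hη]
    _ ≤ _ := abs_im_le_norm _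

lemma hasDerivAt_arctan_sub_div {η : ℝ} (hη : η ≠ 0) (c x : ℝ) :
    HasDerivAt (fun x => Real.arctan ((x - c) / η)) (halfPlanePoisson η (c - x)) x := by
  have h := ((hasDerivAt_id' x).sub_const c).div_const η |>.arctan
  convert h using 1
  unfold halfPlanePoisson
  field_simp
  ring

lemma lintegral_halfPlanePoisson_comp_mul_deriv_le {S : Set ℝ} (hS : MeasurableSet S)
    {g g' : ℝ → ℝ} (hg : ∀ t ∈ S, HasDerivWithinAt g (g' t) S t) (hmono : MonotoneOn g S)
    {η : ℝ} (hη : 0 < η) (c : ℝ) :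
    ∫⁻ t in S, .ofReal (halfPlanePoisson η (c - g t) * g' t) ≤ .ofReal π := by
  have hderiv : ∀ t ∈ S, HasDerivWithinAt (fun t => Real.arctan ((g t - c) / η))
      (halfPlanePoisson η (c - g t) * g' t) S t := fun t ht =>
    (hasDerivAt_arctan_sub_div hη.ne' c (g t)).comp_hasDerivWithinAt t (hg t ht)
  have hmono' : MonotoneOn (fun t => Real.arctan ((g t - c) / η)) S := fun s hs t ht hst =>
    Real.arctan_mono (by gcongr; exact hmono hs ht hst)
  calc ∫⁻ t in S, .ofReal (halfPlanePoisson η (c - g t) * g' t)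
      = volume ((fun t => Real.arctan ((g t - c) / η)) '' S) :=
        lintegral_deriv_eq_volume_image_of_monotoneOn hS hderiv hmono'
    _ ≤ volume (Set.Ioo (-(π / 2)) (π / 2)) :=
        measure_mono (Set.image_subset_iff.2 fun t _ => Real.arctan_mem_Ioo _)
    _ = .ofReal π := by rw [Real.volume_Ioo]; ring_nf

section LineFibration

variable {E : Type*} [NormedAddCommGroup E] [InnerProductSpace ℝ E] [FiniteDimensional ℝ E]
  [MeasurableSpace E] [BorelSpace E] {ω : E}

/-- The fibration of `E` by the lines parallel to the unit vector `ω`: the pair `(v, t)`, with `v`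
orthogonal to `ω`, stands for `v + t • ω`. -/
def lineFibration (hω : ‖ω‖ = 1) : (ℝ ∙ ω)ᗮ × ℝ ≃ᵐ E :=
  MeasurableEquiv.prodComm.trans <|
    (MeasurableEquiv.prodCongr
      (LinearIsometryEquiv.toSpanUnitSingleton ω hω).toHomeomorph.toMeasurableEquiv
      (.refl _)).trans <|
    (MeasurableEquiv.toLp 2 _).trans
      (ℝ ∙ ω).orthogonalDecomposition.symm.toHomeomorph.toMeasurableEquiv

lemma lineFibration_apply (hω : ‖ω‖ = 1) (z : (ℝ ∙ ω)ᗮ × ℝ) :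
    lineFibration hω z = (z.1 : E) + z.2 • ω :=
  ((ℝ ∙ ω).orthogonalDecomposition_symm_apply _).trans (add_comm _ _)

lemma measurePreserving_lineFibration (hω : ‖ω‖ = 1) : MeasurePreserving (lineFibration hω) :=
  Measure.measurePreserving_swap.trans <|
    ((LinearIsometryEquiv.toSpanUnitSingleton ω hω).measurePreserving.prod (.id _)).trans <|
    (WithLp.volume_preserving_toLp _ _).trans
      (ℝ ∙ ω).orthogonalDecomposition.symm.measurePreserving

lemma lintegral_le_lintegral_lines (hω : ‖ω‖ = 1) (F : E → ℝ≥0∞) :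
    ∫⁻ x, F x ≤ ∫⁻ v : (ℝ ∙ ω)ᗮ, ∫⁻ t : ℝ, F (v + t • ω) := by
  rw [← (measurePreserving_lineFibration hω).lintegral_comp_emb
    (lineFibration hω).measurableEmbedding]
  simp only [lineFibration_apply]
  exact lintegral_prod_le _

lemma lintegral_eq_lintegral_hyperplanes (hω : ‖ω‖ = 1) {F : E → ℝ≥0∞} (hF : Measurable F) :
    ∫⁻ x, F x = ∫⁻ t : ℝ, ∫⁻ v : (ℝ ∙ ω)ᗮ, F (v + t • ω) := by
  rw [← (measurePreserving_lineFibration hω).lintegral_comp hF]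
  simp only [lineFibration_apply]
  exact lintegral_prod_symm' _ (by fun_prop)

lemma integral_eq_integral_hyperplanes {G : Type*} [NormedAddCommGroup G] [NormedSpace ℝ G]
    (hω : ‖ω‖ = 1) {F : E → G} (hF : Integrable F) :
    ∫ x, F x = ∫ t : ℝ, ∫ v : (ℝ ∙ ω)ᗮ, F (v + t • ω) := by
  have hF' := (measurePreserving_lineFibration hω).integrable_comp_of_integrable hF
  rw [← (measurePreserving_lineFibration hω).integral_comp
    (lineFibration hω).measurableEmbedding]
  simpa only [lineFibration_apply, Function.comp_def, Measure.volume_eq_prod] using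
    integral_prod_symm _ hF'

end LineFibration

section LineEstimate

section NormedSpace

variable {E : Type*} [NormedAddCommGroup E] [NormedSpace ℝ E]

/-- The absolute value of the imaginary part of the symbol `|∇p(ξ)| (lam ± iη - p(ξ))⁻¹`. -/
def poissonWeight (p : E → ℝ) (lam η : ℝ) (ξ : E) : ℝ≥0∞ :=
  .ofReal (halfPlanePoisson η (lam - p ξ) * ‖fderiv ℝ p ξ‖)

variable {p : E → ℝ} {U : Set E} {ω : E} {B η : ℝ}

lemma hasDerivAt_comp_line {x : E} {t : ℝ} (hp : DifferentiableAt ℝ p (x + t • ω)) :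
    HasDerivAt (fun t => p (x + t • ω)) (fderiv ℝ p (x + t • ω) ω) t := by
  simpa [Function.comp_def] using
    hp.hasFDerivAt.comp_hasDerivAt t (((hasDerivAt_id t).smul_const ω).const_add x)

lemma monotoneOn_comp_line (hUo : IsOpen U) (hUc : Convex ℝ U) (hp : DifferentiableOn ℝ p U)
    (hω : ∀ ξ ∈ U, 0 ≤ fderiv ℝ p ξ ω) (x : E) :
    MonotoneOn (fun t : ℝ => p (x + t • ω)) {t | x + t • ω ∈ U} := by
  have hderiv : ∀ t ∈ {t : ℝ | x + t • ω ∈ U},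
      HasDerivAt (fun t => p (x + t • ω)) (fderiv ℝ p (x + t • ω) ω) t := fun t ht =>
    hasDerivAt_comp_line ((hp _ ht).differentiableAt (hUo.mem_nhds ht))
  have hconv : Convex ℝ {t : ℝ | x + t • ω ∈ U} := by
    simpa [Set.preimage, AffineMap.lineMap_apply, add_comm] using
      hUc.affine_preimage (AffineMap.lineMap x (x + ω) : ℝ →ᵃ[ℝ] E)
  exact monotoneOn_of_hasDerivWithinAt_nonneg hconv
    (fun t ht => (hderiv t ht).continuousAt.continuousWithinAt)
    (fun t ht => (hderiv t (interior_subset ht)).hasDerivWithinAt)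
    fun t ht => hω _ (interior_subset (s := {t : ℝ | x + t • ω ∈ U}) ht)

lemma lintegral_line_poissonWeight_le (hUo : IsOpen U) (hUc : Convex ℝ U)
    (hp : DifferentiableOn ℝ p U) (hB : 0 < B) (hω : ∀ ξ ∈ U, ‖fderiv ℝ p ξ‖ ≤ B * fderiv ℝ p ξ ω)
    (lam : ℝ) (hη : 0 < η) (x : E) :
    ∫⁻ t in {t : ℝ | x + t • ω ∈ U}, poissonWeight p lam η (x + t • ω) ≤ .ofReal (B * π) := by
  have hUx : IsOpen {t : ℝ | x + t • ω ∈ U} := hUo.preimage (by fun_prop)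
  have hnonneg : ∀ ξ ∈ U, 0 ≤ fderiv ℝ p ξ ω := fun ξ hξ =>
    nonneg_of_mul_nonneg_right ((norm_nonneg _).trans (hω ξ hξ)) hB
  calc ∫⁻ t in {t : ℝ | x + t • ω ∈ U}, poissonWeight p lam η (x + t • ω)
      ≤ ∫⁻ t in {t : ℝ | x + t • ω ∈ U}, .ofReal B *
          .ofReal (halfPlanePoisson η (lam - p (x + t • ω)) * fderiv ℝ p (x + t • ω) ω) := by
        refine setLIntegral_mono' hUx.measurableSet fun t ht => ?_
        rw [poissonWeight, ← ENNReal.ofReal_mul hB.le, mul_left_comm]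
        have := halfPlanePoisson_nonneg hη.le (lam - p (x + t • ω))
        gcongr
        exact hω _ ht
    _ = .ofReal B * ∫⁻ t in {t : ℝ | x + t • ω ∈ U},
          .ofReal (halfPlanePoisson η (lam - p (x + t • ω)) * fderiv ℝ p (x + t • ω) ω) :=
        lintegral_const_mul' _ _ ENNReal.ofReal_ne_top
    _ ≤ .ofReal B * .ofReal π := by
        gcongr
        exact lintegral_halfPlanePoisson_comp_mul_deriv_le hUx.measurableSet
          (fun t ht => (hasDerivAt_comp_line
            ((hp _ ht).differentiableAt (hUo.mem_nhds ht))).hasDerivWithinAt)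
          (monotoneOn_comp_line hUo hUc hp hnonneg x) hη lam
    _ = .ofReal (B * π) := (ENNReal.ofReal_mul hB.le).symm

lemma aemeasurable_poissonWeight_line [MeasurableSpace E] [BorelSpace E] (hUo : IsOpen U)
    (hp : ContinuousOn p U) (lam η : ℝ) (x : E) :
    AEMeasurable (fun t : ℝ => poissonWeight p lam η (x + t • ω))
      (volume.restrict {t : ℝ | x + t • ω ∈ U}) := by
  have hUx : IsOpen {t : ℝ | x + t • ω ∈ U} := hUo.preimage (by fun_prop)
  have hpx : AEMeasurable (fun t : ℝ => p (x + t • ω))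
      (volume.restrict {t : ℝ | x + t • ω ∈ U}) :=
    (hp.comp (s := {t : ℝ | x + t • ω ∈ U}) (by fun_prop) fun t ht => ht).aemeasurable
      hUx.measurableSet
  have hp' : Measurable fun t : ℝ => ‖fderiv ℝ p (x + t • ω)‖ :=
    (measurable_fderiv ℝ p).norm.comp (by fun_prop)
  exact (((measurable_halfPlanePoisson η).comp_aemeasurable (hpx.const_sub lam)).mul
    hp'.aemeasurable).ennreal_ofReal

lemma lintegral_line_poissonWeight_mul_le [MeasurableSpace E] [BorelSpace E] (hUo : IsOpen U)
    (hUc : Convex ℝ U) (hp : DifferentiableOn ℝ p U) (hB : 0 < B)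
    (hω : ∀ ξ ∈ U, ‖fderiv ℝ p ξ‖ ≤ B * fderiv ℝ p ξ ω) (lam : ℝ) (hη : 0 < η) (G : E → ℝ≥0∞)
    (x : E) :
    ∫⁻ t in {t : ℝ | x + t • ω ∈ U}, poissonWeight p lam η (x + t • ω) * G (x + t • ω) ≤
      .ofReal (B * π) * ⨆ t : ℝ, G (x + t • ω) := by
  calc ∫⁻ t in {t : ℝ | x + t • ω ∈ U}, poissonWeight p lam η (x + t • ω) * G (x + t • ω)
      ≤ ∫⁻ t in {t : ℝ | x + t • ω ∈ U},
          poissonWeight p lam η (x + t • ω) * ⨆ t : ℝ, G (x + t • ω) := by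
        gcongr with t
        exact le_iSup (fun t : ℝ => G (x + t • ω)) t
    _ = (∫⁻ t in {t : ℝ | x + t • ω ∈ U}, poissonWeight p lam η (x + t • ω)) *
          ⨆ t : ℝ, G (x + t • ω) :=
        lintegral_mul_const'' _ (aemeasurable_poissonWeight_line hUo hp.continuousOn lam η x)
    _ ≤ _ := by
        gcongr
        exact lintegral_line_poissonWeight_le hUo hUc hp hB hω lam hη x

end NormedSpace

variable {E : Type*} [NormedAddCommGroup E] [InnerProductSpace ℝ E] [FiniteDimensional ℝ E]
  [MeasurableSpace E] [BorelSpace E]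

/-- The integral, over all lines parallel to `ω`, of the supremum of `G` on the line. -/
def lineSupIntegral (ω : E) (G : E → ℝ≥0∞) : ℝ≥0∞ :=
  ∫⁻ v : (ℝ ∙ ω)ᗮ, ⨆ t : ℝ, G (v + t • ω)

lemma setLIntegral_poissonWeight_mul_le {p : E → ℝ} {U : Set E} (hUo : IsOpen U)
    (hUc : Convex ℝ U) (hp : DifferentiableOn ℝ p U) {B : ℝ} (hB : 0 < B) {ω : E} (hω1 : ‖ω‖ = 1)
    (hω : ∀ ξ ∈ U, ‖fderiv ℝ p ξ‖ ≤ B * fderiv ℝ p ξ ω) (lam : ℝ) {η : ℝ} (hη : 0 < η)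
    (G : E → ℝ≥0∞) :
    ∫⁻ ξ in U, poissonWeight p lam η ξ * G ξ ≤ .ofReal (B * π) * lineSupIntegral ω G := by
  calc ∫⁻ ξ in U, poissonWeight p lam η ξ * G ξ
      = ∫⁻ ξ, U.indicator (fun ξ => poissonWeight p lam η ξ * G ξ) ξ :=
        (lintegral_indicator hUo.measurableSet _).symm
    _ ≤ ∫⁻ v : (ℝ ∙ ω)ᗮ, ∫⁻ t : ℝ,
          U.indicator (fun ξ => poissonWeight p lam η ξ * G ξ) (v + t • ω) :=
        lintegral_le_lintegral_lines hω1 _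
    _ = ∫⁻ v : (ℝ ∙ ω)ᗮ, ∫⁻ t in {t : ℝ | v + t • ω ∈ U},
          poissonWeight p lam η (v + t • ω) * G (v + t • ω) := by
        congr 1 with v
        have hUv : IsOpen {t : ℝ | v + t • ω ∈ U} := hUo.preimage (by fun_prop)
        exact lintegral_indicator hUv.measurableSet _
    _ ≤ ∫⁻ v : (ℝ ∙ ω)ᗮ, .ofReal (B * π) * ⨆ t : ℝ, G (v + t • ω) :=
        lintegral_mono fun v =>
          lintegral_line_poissonWeight_mul_le hUo hUc hp hB hω lam hη G v
    _ = .ofReal (B * π) * lineSupIntegral ω G :=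
        lintegral_const_mul' _ _ ENNReal.ofReal_ne_top

end LineEstimate

section Homogeneous

open scoped Pointwise

section NormedSpace

variable {E : Type*} [NormedAddCommGroup E] [NormedSpace ℝ E]

/-- Positive homogeneity of degree `m`. -/
def PosHomogeneous (m : ℝ) (p : E → ℝ) : Prop :=
  ∀ t : ℝ, 0 < t → ∀ ξ, p (t • ξ) = t ^ m * p ξ

variable {m : ℝ} {p : E → ℝ}

namespace PosHomogeneous

lemma fderiv_smul (hp : PosHomogeneous m p) {t : ℝ} (ht : 0 < t) (ξ : E) :
    fderiv ℝ p (t • ξ) = t ^ (m - 1) • fderiv ℝ p ξ := by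
  have hscale : t • fderiv ℝ p (t • ξ) = t ^ m • fderiv ℝ p ξ := by
    rw [← fderiv_comp_smul, ← Pi.smul_apply, ← fderiv_const_smul_field]
    congr 1
    exact funext (hp t ht)
  rw [Real.rpow_sub_one ht.ne', div_eq_inv_mul, mul_smul, ← hscale, inv_smul_smul₀ ht.ne']

/-- Euler's identity. -/
lemma fderiv_apply_self (hp : PosHomogeneous m p) {ξ : E} (hξ : DifferentiableAt ℝ p ξ) :
    fderiv ℝ p ξ ξ = m * p ξ := by
  have hray : HasDerivAt (fun t : ℝ => p (t • ξ)) (fderiv ℝ p ξ ξ) 1 := by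
    have hξ' : HasFDerivAt p (fderiv ℝ p ξ) ((1 : ℝ) • ξ) := by
      simpa using hξ.hasFDerivAt
    simpa [Function.comp_def] using hξ'.comp_hasDerivAt 1 ((hasDerivAt_id (1 : ℝ)).smul_const ξ)
  have hpow : HasDerivAt (fun t : ℝ => t ^ m * p ξ) (m * p ξ) 1 := by
    simpa using (Real.hasDerivAt_rpow_const (x := 1) (p := m) (.inl one_ne_zero)).mul_const (p ξ)
  refine hray.unique (hpow.congr_of_eventuallyEq ?_)
  filter_upwards [lt_mem_nhds zero_lt_one] with t ht using hp t ht ξ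

lemma fderiv_ne_zero (hp : PosHomogeneous m p) (hm : m ≠ 0) (hp1 : ContDiffOn ℝ 1 p {0}ᶜ)
    (hp0 : ∀ ξ, ξ ≠ 0 → p ξ ≠ 0) {ξ : E} (hξ : ξ ≠ 0) : fderiv ℝ p ξ ≠ 0 := fun h0 => by
  have hdiff : DifferentiableAt ℝ p ξ := (hp1.differentiableOn one_ne_zero).differentiableAt
    (isOpen_compl_singleton.mem_nhds hξ)
  exact mul_ne_zero hm (hp0 ξ hξ) (by rw [← hp.fderiv_apply_self hdiff, h0, _root_.zero_apply])

lemma rpow (hp : PosHomogeneous m p) (hnonneg : ∀ ξ, 0 ≤ p ξ) (r : ℝ) :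
    PosHomogeneous (m * r) fun ξ => p ξ ^ r := by
  intro t ht ξ
  simp only
  rw [hp t ht, Real.mul_rpow (Real.rpow_nonneg ht.le m) (hnonneg ξ), Real.rpow_mul ht.le]

lemma apply_zero (hp : PosHomogeneous m p) (hm : m ≠ 0) : p 0 = 0 := by
  have hpow : (2 : ℝ) ^ m ≠ 1 := by
    rw [← Real.rpow_zero 2, Ne, Real.rpow_right_inj two_pos (by norm_num)]
    exact hm
  by_contra h0
  exact hpow ((right_eq_mul₀ h0).1 (by simpa using hp 2 two_pos 0))

lemma nonneg_of_pos (hp : PosHomogeneous m p) (hm : m ≠ 0) (hpos : ∀ ξ, ξ ≠ 0 → 0 < p ξ) (ξ : E) :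
    0 ≤ p ξ := by
  rcases eq_or_ne ξ 0 with rfl | hξ
  exacts [(hp.apply_zero hm).ge, (hpos ξ hξ).le]

lemma exists_norm_fderiv_le [FiniteDimensional ℝ E] (hp : PosHomogeneous m p)
    (hp1 : ContDiffOn ℝ 1 p {0}ᶜ) : ∃ M, ∀ ξ ≠ 0, ‖fderiv ℝ p ξ‖ ≤ M * ‖ξ‖ ^ (m - 1) := by
  have hcont : ContinuousOn (fderiv ℝ p) (Metric.sphere 0 1) :=
    (hp1.continuousOn_fderiv_of_isOpen isOpen_compl_singleton le_rfl).mono fun ξ hξ =>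
      ne_zero_of_mem_unit_sphere ⟨ξ, hξ⟩
  obtain ⟨M, hM⟩ := (isCompact_sphere (0 : E) 1).exists_bound_of_continuousOn hcont
  refine ⟨M, fun ξ hξ => ?_⟩
  have hξ' : 0 < ‖ξ‖ := norm_pos_iff.2 hξ
  have hunit : ‖ξ‖⁻¹ • ξ ∈ Metric.sphere (0 : E) 1 := by
    simp [norm_smul, hξ'.ne']
  calc ‖fderiv ℝ p ξ‖ = ‖fderiv ℝ p (‖ξ‖ • ‖ξ‖⁻¹ • ξ)‖ := by rw [smul_inv_smul₀ hξ'.ne']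
    _ = ‖ξ‖ ^ (m - 1) * ‖fderiv ℝ p (‖ξ‖⁻¹ • ξ)‖ := by
      rw [hp.fderiv_smul hξ', norm_smul, Real.norm_of_nonneg (by positivity)]
    _ ≤ ‖ξ‖ ^ (m - 1) * M := by
      gcongr
      exact hM _ hunit
    _ = M * ‖ξ‖ ^ (m - 1) := mul_comm _ _

end PosHomogeneous

lemma isOpen_coneHull {s : Set E} (hs : IsOpen s) (hsc : Convex ℝ s) :
    IsOpen (ConvexCone.hull ℝ s : Set E) := by
  have hunion : (ConvexCone.hull ℝ s : Set E) = ⋃ t : Set.Ioi (0 : ℝ), t.1 • s := by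
    ext ξ
    simp [ConvexCone.mem_hull_of_convex hsc]
  rw [hunion]
  exact isOpen_iUnion fun t => hs.smul₀ t.2.ne'

end NormedSpace

variable {E : Type*} [NormedAddCommGroup E] [InnerProductSpace ℝ E] {m : ℝ} {p : E → ℝ}

lemma exists_unit_apply_eq_norm [CompleteSpace E] {ℓ : E →L[ℝ] ℝ} (hℓ : ℓ ≠ 0) :
    ∃ θ : E, ‖θ‖ = 1 ∧ ℓ θ = ‖ℓ‖ := by
  obtain ⟨u, rfl⟩ := (InnerProductSpace.toDual ℝ E).surjective ℓ
  have hu : u ≠ 0 := by simpa using hℓ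
  refine ⟨‖u‖⁻¹ • u, norm_smul_inv_norm hu, ?_⟩
  simp [sq, hu]

lemma PosHomogeneous.exists_cone_norm_fderiv_le [CompleteSpace E] (hp : PosHomogeneous m p)
    (hp1 : ContDiffOn ℝ 1 p {0}ᶜ) {ω : E} (hω : ω ≠ 0) (hgrad : fderiv ℝ p ω ≠ 0)
    {B : ℝ} (hB : 1 < B) :
    ∃ θ : E, ‖θ‖ = 1 ∧ ∃ U : ConvexCone ℝ E, IsOpen (U : Set E) ∧ ω ∈ U ∧
      ∀ ξ ∈ U, ξ ≠ 0 ∧ ‖fderiv ℝ p ξ‖ ≤ B * fderiv ℝ p ξ θ := by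
  obtain ⟨θ, hθ, hθω⟩ := exists_unit_apply_eq_norm hgrad
  have hcont : ContinuousAt (fderiv ℝ p) ω :=
    (hp1.continuousOn_fderiv_of_isOpen isOpen_compl_singleton le_rfl).continuousAt
      (isOpen_compl_singleton.mem_nhds hω)
  have hstrict : ‖fderiv ℝ p ω‖ < B * fderiv ℝ p ω θ := by
    rw [hθω]
    exact lt_mul_of_one_lt_left (norm_pos_iff.2 hgrad) hB
  have hnear : ∀ᶠ ξ in nhds ω, ξ ≠ 0 ∧ ‖fderiv ℝ p ξ‖ < B * fderiv ℝ p ξ θ :=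
    (eventually_ne_nhds hω).and <|
      hcont.norm.eventually_lt (continuousAt_const.mul (hcont.clm_apply continuousAt_const)) hstrict
  obtain ⟨r, hr, hball⟩ := Metric.eventually_nhds_iff_ball.1 hnear
  have hconv : Convex ℝ (Metric.ball ω r) := convex_ball ω r
  refine ⟨θ, hθ, ConvexCone.hull ℝ (Metric.ball ω r), isOpen_coneHull Metric.isOpen_ball hconv,
    ConvexCone.subset_hull (Metric.mem_ball_self hr), fun ξ hξ => ?_⟩
  obtain ⟨t, ht, ζ, hζ, rfl⟩ := (ConvexCone.mem_hull_of_convex hconv).1 hξ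
  obtain ⟨hζ0, hζB⟩ := hball ζ hζ
  refine ⟨smul_ne_zero ht.ne' hζ0, ?_⟩
  change ‖fderiv ℝ p (t • ζ)‖ ≤ B * fderiv ℝ p (t • ζ) θ
  rw [hp.fderiv_smul ht, norm_smul, Real.norm_of_nonneg (by positivity), _root_.smul_apply,
    smul_eq_mul, mul_left_comm]
  gcongr

end Homogeneous

section Covering

variable {E : Type*} [NormedAddCommGroup E] [InnerProductSpace ℝ E] [FiniteDimensional ℝ E]
  [MeasurableSpace E] [BorelSpace E]

lemma PosHomogeneous.exists_lintegral_poissonWeight_mul_le [Nontrivial E] {m : ℝ} {p : E → ℝ}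
    (hp : PosHomogeneous m p) (hp1 : ContDiffOn ℝ 1 p {0}ᶜ) (hgrad : ∀ ξ ≠ 0, fderiv ℝ p ξ ≠ 0) :
    ∃ N : ℕ, ∀ lam η : ℝ, 0 < η → ∀ G : E → ℝ≥0∞,
      ∫⁻ ξ, poissonWeight p lam η ξ * G ξ ≤
        N * (.ofReal (2 * π) * ⨆ θ : Metric.sphere (0 : E) 1, lineSupIntegral (θ : E) G) := by
  choose θ hθ U hUo hωU hU using fun ω : Metric.sphere (0 : E) 1 =>
    hp.exists_cone_norm_fderiv_le hp1 (ne_zero_of_mem_unit_sphere ω)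
      (hgrad _ (ne_zero_of_mem_unit_sphere ω)) one_lt_two
  obtain ⟨s, hs⟩ := (isCompact_sphere (0 : E) 1).elim_finite_subcover (fun ω => (U ω : Set E)) hUo
    fun ω hω => Set.mem_iUnion.2 ⟨⟨ω, hω⟩, hωU _⟩
  have hcover : ({0}ᶜ : Set E) ⊆ ⋃ ω : s, U ω := fun ξ hξ => by
    have hξ' : 0 < ‖ξ‖ := norm_pos_iff.2 hξ
    have hunit : ‖ξ‖⁻¹ • ξ ∈ Metric.sphere (0 : E) 1 := by simp [norm_smul, hξ'.ne']
    obtain ⟨ω, hωs, hω⟩ := Set.mem_iUnion₂.1 (hs hunit)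
    refine Set.mem_iUnion.2 ⟨⟨ω, hωs⟩, ?_⟩
    simpa only [smul_inv_smul₀ hξ'.ne', SetLike.mem_coe] using (U ω).smul_mem hξ' hω
  refine ⟨s.card, fun lam η hη G => ?_⟩
  calc ∫⁻ ξ, poissonWeight p lam η ξ * G ξ
      = ∫⁻ ξ in {0}ᶜ, poissonWeight p lam η ξ * G ξ := by rw [restrict_compl_singleton]
    _ ≤ ∫⁻ ξ in ⋃ ω : s, U ω, poissonWeight p lam η ξ * G ξ := lintegral_mono_set hcover
    _ ≤ ∑ ω : s, ∫⁻ ξ in U ω, poissonWeight p lam η ξ * G ξ :=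
        (lintegral_iUnion_le _ _).trans_eq (tsum_fintype _)
    _ ≤ ∑ _ω : s, .ofReal (2 * π) *
          ⨆ θ : Metric.sphere (0 : E) 1, lineSupIntegral (θ : E) G := by
        refine Finset.sum_le_sum fun ω _ => ?_
        have hdiff : DifferentiableOn ℝ p (U ω) :=
          (hp1.differentiableOn one_ne_zero).mono fun ξ hξ => (hU ω ξ hξ).1
        refine (setLIntegral_poissonWeight_mul_le (hUo ω) (U ω).convex hdiff two_pos (hθ ω)
          (fun ξ hξ => (hU ω ξ hξ).2) lam hη G).trans ?_
        gcongr
        exact le_iSup (fun θ : Metric.sphere (0 : E) 1 => lineSupIntegral (θ : E) G)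
          ⟨θ ω, by simp [hθ]⟩
    _ = s.card * (.ofReal (2 * π) *
          ⨆ θ : Metric.sphere (0 : E) 1, lineSupIntegral (θ : E) G) := by
        rw [Finset.sum_const, nsmul_eq_mul, Finset.card_univ, Fintype.card_coe]

end Covering

section Weights

section Bracket

variable {E : Type*} [NormedAddCommGroup E]

/-- The weight `⟨x⟩ ^ δ`, where `⟨x⟩ = √(1 + |x|²)`. -/
def bracketPow (δ : ℝ) (x : E) : ℝ := √(1 + ‖x‖ ^ 2) ^ δ

lemma bracketPow_pos (δ : ℝ) (x : E) : 0 < bracketPow δ x := by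
  unfold bracketPow
  positivity

lemma bracketPow_eq_rpow (δ : ℝ) (x : E) : bracketPow δ x = (1 + ‖x‖ ^ 2) ^ (δ / 2) := by
  rw [bracketPow, Real.sqrt_eq_rpow, ← Real.rpow_mul (by positivity), one_div_mul_eq_div]

lemma bracketPow_le_of_norm_le {F : Type*} [NormedAddCommGroup F] {δ : ℝ} (hδ : 0 ≤ δ) {x : E}
    {y : F} (h : ‖x‖ ≤ ‖y‖) : bracketPow δ x ≤ bracketPow δ y := by
  unfold bracketPow
  gcongr

@[fun_prop]
lemma continuous_bracketPow (δ : ℝ) : Continuous (bracketPow δ : E → ℝ) := by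
  have hne : ∀ x : E, √(1 + ‖x‖ ^ 2) ≠ 0 := fun x => by positivity
  exact Continuous.rpow_const (by fun_prop) fun x => .inl (hne x)

/-- The square of the weighted norm `‖⟨x⟩ ^ δ f‖` in `L²`. -/
def weightedSq [MeasureSpace E] (δ : ℝ) (f : E → ℂ) : ℝ≥0∞ :=
  ∫⁻ x, (‖bracketPow δ x‖ₑ * ‖f x‖ₑ) ^ 2

lemma weightedSq_eq_eLpNorm_sq [MeasureSpace E] (δ : ℝ) (f : E → ℂ) :
    weightedSq δ f = eLpNorm (fun x => (bracketPow δ x : ℂ) * f x) 2 volume ^ 2 := by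
  have h := eLpNorm_nnreal_pow_eq_lintegral (μ := (volume : Measure E))
    (f := fun x => (bracketPow δ x : ℂ) * f x) (p := 2) two_ne_zero
  have hcast : ∀ x : E, ‖(bracketPow δ x : ℂ)‖ₑ = ‖bracketPow δ x‖ₑ := fun x =>
    enorm_eq_iff_norm_eq.2 (Complex.norm_real _)
  simpa [weightedSq, enorm_mul, eq_comm, hcast] using h

end Bracket

/-- The Cauchy–Schwarz constant `∫ ⟨s⟩ ^ (-2δ) ds` of the trace estimate. -/
def bracketTraceConst (δ : ℝ) : ℝ≥0∞ := ∫⁻ s : ℝ, ‖bracketPow δ s‖ₑ⁻¹ ^ 2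

lemma bracketTraceConst_ne_top {δ : ℝ} (hδ : 1 / 2 < δ) : bracketTraceConst δ ≠ ⊤ := by
  have hint : Integrable fun s : ℝ => (1 + ‖s‖ ^ 2) ^ (-(2 * δ) / 2) :=
    integrable_rpow_neg_one_add_norm_sq (by rw [Module.finrank_self]; push_cast; linarith)
  have heq : ∀ s : ℝ, ‖bracketPow δ s‖ₑ⁻¹ ^ 2 = ‖(1 + ‖s‖ ^ 2) ^ (-(2 * δ) / 2)‖ₑ := fun s => by
    rw [← enorm_inv (bracketPow_pos δ s).ne', ← enorm_pow, bracketPow_eq_rpow,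
      ← Real.rpow_neg (by positivity), ← Real.rpow_mul_natCast (by positivity)]
    ring_nf
  rw [bracketTraceConst, lintegral_congr heq]
  exact hint.2.ne

lemma sq_lintegral_le_mul_lintegral_sq {α : Type*} [MeasurableSpace α] {μ : Measure α}
    {w u : α → ℝ≥0∞} (hw : AEMeasurable w μ) (hw0 : ∀ x, w x ≠ 0) (hwtop : ∀ x, w x ≠ ⊤)
    (hu : AEMeasurable u μ) :
    (∫⁻ x, u x ∂μ) ^ 2 ≤ (∫⁻ x, (w x)⁻¹ ^ 2 ∂μ) * ∫⁻ x, (w x * u x) ^ 2 ∂μ := by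
  have hcs := ENNReal.lintegral_mul_le_Lp_mul_Lq μ Real.HolderConjugate.two_two hw.inv (hw.mul hu)
  have hcancel : ∀ x, (w⁻¹ * (w * u)) x = u x := fun x => by
    simp [← mul_assoc, ENNReal.inv_mul_cancel (hw0 x) (hwtop x)]
  simp only [hcancel] at hcs
  calc _ ≤ _ := pow_le_pow_left' hcs 2
    _ = _ := by
      simp [mul_pow, ← ENNReal.rpow_mul_natCast]

lemma weightedSq_schwartz_ne_top {E : Type*} [NormedAddCommGroup E] [InnerProductSpace ℝ E]
    [FiniteDimensional ℝ E] [MeasurableSpace E] [BorelSpace E] (δ : ℝ) (f : 𝓢(E, ℂ)) :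
    weightedSq δ f ≠ ⊤ := by
  have h := (SchwartzMap.smulLeftCLM ℂ (fun x : E => (1 + ‖x‖ ^ 2) ^ (δ / 2)) f).memLp 2 volume
  have heq : ⇑(SchwartzMap.smulLeftCLM ℂ (fun x : E => (1 + ‖x‖ ^ 2) ^ (δ / 2)) f) =
      fun x => (bracketPow δ x : ℂ) * f x := funext fun x => by
    rw [SchwartzMap.smulLeftCLM_apply_apply
      (Function.hasTemperateGrowth_one_add_norm_sq_rpow E (δ / 2)), bracketPow_eq_rpow, real_smul]
  rw [weightedSq_eq_eLpNorm_sq, ← heq]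
  exact ENNReal.pow_ne_top h.eLpNorm_ne_top

end Weights

section Trace

variable {E : Type*} [NormedAddCommGroup E] [InnerProductSpace ℝ E] {ω : E}

lemma inner_orthogonal_singleton_left (v : (ℝ ∙ ω)ᗮ) : ⟪ω, (v : E)⟫ = 0 :=
  Submodule.mem_orthogonal_singleton_iff_inner_right.1 v.2

lemma inner_add_smul_add_smul (hω : ‖ω‖ = 1) (v w : (ℝ ∙ ω)ᗮ) (s t : ℝ) :
    ⟪(v : E) + s • ω, (w : E) + t • ω⟫ = ⟪v, w⟫ + s * t := by
  simp [inner_add_left, inner_add_right, inner_smul_left, inner_smul_right,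
    real_inner_comm ω (v : E), inner_orthogonal_singleton_left, hω, mul_comm]

lemma norm_le_norm_add_smul (hω : ‖ω‖ = 1) (v : (ℝ ∙ ω)ᗮ) (s : ℝ) :
    ‖s‖ ≤ ‖(v : E) + s • ω‖ := by
  have hinner : ⟪ω, (v : E) + s • ω⟫ = s := by
    simp [inner_add_right, inner_smul_right, inner_orthogonal_singleton_left, hω]
  simpa [hinner, hω] using norm_inner_le_norm (𝕜 := ℝ) ω ((v : E) + s • ω)

/-- The restriction of a Schwartz function to the hyperplane of equation `⟪x, ω⟫ = s`, for a unit
vector `ω`, as a Schwartz function on the orthogonal complement of `ω`. -/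
def hyperplaneSlice (ω : E) (s : ℝ) (f : 𝓢(E, ℂ)) : 𝓢((ℝ ∙ ω)ᗮ, ℂ) :=
  have htemperate : Function.HasTemperateGrowth fun v : (ℝ ∙ ω)ᗮ => (v : E) + s • ω :=
    (ℝ ∙ ω)ᗮ.subtypeL.hasTemperateGrowth.add (.const _)
  have hantilipschitz : AntilipschitzWith 1 fun v : (ℝ ∙ ω)ᗮ => (v : E) + s • ω :=
    fun v w => by simp [Subtype.edist_eq]
  SchwartzMap.compCLMOfAntilipschitz ℂ htemperate hantilipschitz f

lemma hyperplaneSlice_apply (ω : E) (s : ℝ) (f : 𝓢(E, ℂ)) (v : (ℝ ∙ ω)ᗮ) :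
    hyperplaneSlice ω s f v = f (v + s • ω) := rfl

variable [FiniteDimensional ℝ E] [MeasurableSpace E] [BorelSpace E]

lemma stronglyMeasurable_fourier_hyperplaneSlice (ω : E) (f : 𝓢(E, ℂ)) :
    StronglyMeasurable fun z : (ℝ ∙ ω)ᗮ × ℝ => 𝓕 (hyperplaneSlice ω z.2 f) z.1 := by
  have hcont : Continuous fun q : ((ℝ ∙ ω)ᗮ × ℝ) × (ℝ ∙ ω)ᗮ =>
      cexp (↑(-2 * π * ⟪q.2, q.1.1⟫) * I) • f (q.2 + q.1.2 • ω) := by fun_prop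
  simp only [SchwartzMap.fourier_coe, Real.fourier_eq', hyperplaneSlice_apply]
  exact hcont.stronglyMeasurable.integral_prod_right'

lemma fourier_add_smul_eq_fourier_slices (hω : ‖ω‖ = 1) (f : 𝓢(E, ℂ)) (v : (ℝ ∙ ω)ᗮ) (t : ℝ) :
    𝓕 f ((v : E) + t • ω) = 𝓕 (fun s : ℝ => 𝓕 (hyperplaneSlice ω s f) v) t := by
  have hint : Integrable fun x : E => 𝐞 (-⟪x, (v : E) + t • ω⟫) • f x :=
    (Real.fourierIntegral_convergent_iff _).2 f.integrable
  rw [SchwartzMap.fourier_coe, Real.fourier_eq, integral_eq_integral_hyperplanes hω hint,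
    Real.fourier_eq]
  congr 1 with s
  simp only [SchwartzMap.fourier_coe, Real.fourier_eq, Circle.smul_def, ← integral_smul]
  congr 1 with x
  rw [inner_add_smul_add_smul hω, hyperplaneSlice_apply, neg_add_rev, AddChar.map_add_eq_mul,
    Circle.coe_mul, mul_smul, mul_comm s t]
  rfl

lemma lintegral_enorm_sq_fourier (f : 𝓢(E, ℂ)) :
    ∫⁻ ξ, ‖𝓕 f ξ‖ₑ ^ 2 = ∫⁻ x, ‖f x‖ₑ ^ 2 := by
  have h : ∀ g : 𝓢(E, ℂ), ∫⁻ x, ‖g x‖ₑ ^ 2 = ENNReal.ofReal (∫ x, ‖g x‖ ^ 2) := fun g => by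
    have hint : Integrable fun x => ‖g x‖ ^ 2 := by
      simpa using (g.memLp 2).integrable_norm_pow two_ne_zero
    rw [ofReal_integral_eq_lintegral_ofReal hint (.of_forall fun x => by positivity)]
    simp only [ENNReal.ofReal_pow (norm_nonneg _), ofReal_norm]
  rw [h, h, SchwartzMap.integral_norm_sq_fourier]

lemma enorm_sq_fourier_add_smul_le (hω : ‖ω‖ = 1) (δ : ℝ) (f : 𝓢(E, ℂ)) (v : (ℝ ∙ ω)ᗮ) (t : ℝ) :
    ‖𝓕 f ((v : E) + t • ω)‖ₑ ^ 2 ≤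
      bracketTraceConst δ *
        ∫⁻ s : ℝ, (‖bracketPow δ s‖ₑ * ‖𝓕 (hyperplaneSlice ω s f) v‖ₑ) ^ 2 := by
  have hmeas : AEMeasurable fun s : ℝ => ‖𝓕 (hyperplaneSlice ω s f) v‖ₑ :=
    ((stronglyMeasurable_fourier_hyperplaneSlice ω f).measurable.comp
      measurable_prodMk_left).enorm.aemeasurable
  calc ‖𝓕 f ((v : E) + t • ω)‖ₑ ^ 2
      ≤ (∫⁻ s : ℝ, ‖𝓕 (hyperplaneSlice ω s f) v‖ₑ) ^ 2 := by
        rw [fourier_add_smul_eq_fourier_slices hω, Real.fourier_eq]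
        gcongr
        refine (enorm_integral_le_lintegral_enorm _).trans_eq (lintegral_congr fun s => ?_)
        exact enorm_eq_iff_norm_eq.2 (Circle.norm_smul _ _)
    _ ≤ _ := sq_lintegral_le_mul_lintegral_sq (by fun_prop)
        (fun s => enorm_ne_zero.2 (bracketPow_pos δ s).ne') (fun s => enorm_ne_top) hmeas

lemma lintegral_hyperplanes_le_weightedSq (hω : ‖ω‖ = 1) {δ : ℝ} (hδ : 0 ≤ δ) {f : E → ℂ}
    (hf : Measurable f) :
    ∫⁻ s : ℝ, ∫⁻ v : (ℝ ∙ ω)ᗮ, (‖bracketPow δ s‖ₑ * ‖f (v + s • ω)‖ₑ) ^ 2 ≤ weightedSq δ f := by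
  rw [weightedSq, lintegral_eq_lintegral_hyperplanes hω (by fun_prop)]
  gcongr with s v
  rw [enorm_le_iff_norm_le, Real.norm_of_nonneg (bracketPow_pos δ s).le,
    Real.norm_of_nonneg (bracketPow_pos δ _).le]
  exact bracketPow_le_of_norm_le hδ (norm_le_norm_add_smul hω v s)

lemma lineSupIntegral_enorm_sq_fourier_le (hω : ‖ω‖ = 1) {δ : ℝ} (hδ : 1 / 2 < δ) (f : 𝓢(E, ℂ)) :
    lineSupIntegral ω (fun ξ => ‖𝓕 f ξ‖ₑ ^ 2) ≤ bracketTraceConst δ * weightedSq δ f := by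
  have hmeas : Measurable fun z : (ℝ ∙ ω)ᗮ × ℝ => ‖𝓕 (hyperplaneSlice ω z.2 f) z.1‖ₑ :=
    (stronglyMeasurable_fourier_hyperplaneSlice ω f).measurable.enorm
  have hweight : Continuous fun z : (ℝ ∙ ω)ᗮ × ℝ => bracketPow δ z.2 := by fun_prop
  calc lineSupIntegral ω (fun ξ => ‖𝓕 f ξ‖ₑ ^ 2)
      ≤ ∫⁻ v : (ℝ ∙ ω)ᗮ, bracketTraceConst δ *
          ∫⁻ s : ℝ, (‖bracketPow δ s‖ₑ * ‖𝓕 (hyperplaneSlice ω s f) v‖ₑ) ^ 2 :=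
        lintegral_mono fun v => iSup_le fun t => enorm_sq_fourier_add_smul_le hω δ f v t
    _ = bracketTraceConst δ * ∫⁻ v : (ℝ ∙ ω)ᗮ,
          ∫⁻ s : ℝ, (‖bracketPow δ s‖ₑ * ‖𝓕 (hyperplaneSlice ω s f) v‖ₑ) ^ 2 :=
        lintegral_const_mul' _ _ (bracketTraceConst_ne_top hδ)
    _ = bracketTraceConst δ * ∫⁻ s : ℝ,
          ∫⁻ v : (ℝ ∙ ω)ᗮ, (‖bracketPow δ s‖ₑ * ‖𝓕 (hyperplaneSlice ω s f) v‖ₑ) ^ 2 := by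
        rw [lintegral_lintegral_swap
          ((hweight.measurable.enorm.mul hmeas).pow_const 2).aemeasurable]
    _ = bracketTraceConst δ * ∫⁻ s : ℝ,
          ∫⁻ v : (ℝ ∙ ω)ᗮ, (‖bracketPow δ s‖ₑ * ‖f (v + s • ω)‖ₑ) ^ 2 := by
        congr 2 with s
        simp only [mul_pow]
        rw [lintegral_const_mul' _ _ (by finiteness), lintegral_const_mul' _ _ (by finiteness),
          lintegral_enorm_sq_fourier]
        rfl
    _ ≤ bracketTraceConst δ * weightedSq δ f := by
        gcongr
        exact lintegral_hyperplanes_le_weightedSq hω (by linarith) f.continuous.measurable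

end Trace

section Dilation

variable {E : Type*} [NormedAddCommGroup E] [MeasureSpace E]

lemma weightedSq_const_mul (δ : ℝ) (c : ℂ) (f : E → ℂ) :
    weightedSq δ (fun x => c * f x) = ‖c‖ₑ ^ 2 * weightedSq δ f := by
  rw [weightedSq, weightedSq, ← lintegral_const_mul' _ _ (by finiteness)]
  simp only [enorm_mul, mul_pow, mul_left_comm]

variable [NormedSpace ℝ E] [FiniteDimensional ℝ E] [BorelSpace E]
  [(volume : Measure E).IsAddHaarMeasure]

lemma lintegral_comp_smul {r : ℝ} (hr : r ≠ 0) (f : E → ℝ≥0∞) :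
    ∫⁻ x, f (r • x) = .ofReal |(r ^ Module.finrank ℝ E)⁻¹| * ∫⁻ x, f x := by
  have hemb := (Homeomorph.smulOfNeZero (α := E) r hr).measurableEmbedding
  rw [← smul_eq_mul, ← lintegral_smul_measure, ← Measure.map_addHaar_smul volume hr]
  exact (hemb.lintegral_map f).symm

lemma weightedSq_comp_smul_le {δ : ℝ} (hδ : 0 ≤ δ) {r : ℝ} (hr : 1 ≤ r) (f : E → ℂ) :
    weightedSq δ (fun x => f (r • x)) ≤
      .ofReal |(r ^ Module.finrank ℝ E)⁻¹| * weightedSq δ f := by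
  calc weightedSq δ (fun x => f (r • x))
      ≤ ∫⁻ x, (‖bracketPow δ (r • x)‖ₑ * ‖f (r • x)‖ₑ) ^ 2 := by
        rw [weightedSq]
        gcongr with x
        rw [enorm_le_iff_norm_le, Real.norm_of_nonneg (bracketPow_pos δ x).le,
          Real.norm_of_nonneg (bracketPow_pos δ _).le]
        refine bracketPow_le_of_norm_le hδ ?_
        rw [norm_smul, Real.norm_of_nonneg (by linarith)]
        exact le_mul_of_one_le_left (norm_nonneg x) hr
    _ = _ := lintegral_comp_smul (by linarith) fun x => (‖bracketPow δ x‖ₑ * ‖f x‖ₑ) ^ 2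

end Dilation

section Normalization

variable {n : ℕ}

/-- The function `(2π) ^ (n / 2) f(2π x)`, whose Fourier transform with kernel `e ^ (-2πi x·ξ)`
is `FT n f`. -/
def angularDilation (f : 𝓢(EuclideanSpace ℝ (Fin n), ℂ)) : 𝓢(EuclideanSpace ℝ (Fin n), ℂ) :=
  (((2 * π) ^ ((n : ℝ) / 2) : ℝ) : ℂ) • SchwartzMap.compCLMOfContinuousLinearEquiv ℂ
    (ContinuousLinearEquiv.smulLeft (Units.mk0 (2 * π) two_pi_pos.ne')) f

lemma angularDilation_apply (f : 𝓢(EuclideanSpace ℝ (Fin n), ℂ)) (x : EuclideanSpace ℝ (Fin n)) :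
    angularDilation f x = (((2 * π) ^ ((n : ℝ) / 2) : ℝ) : ℂ) * f ((2 * π) • x) := rfl

lemma fourier_angularDilation (f : 𝓢(EuclideanSpace ℝ (Fin n), ℂ)) :
    𝓕 (angularDilation f) = FT n f := by
  ext ξ
  have hscale := Measure.integral_comp_smul (volume : Measure (EuclideanSpace ℝ (Fin n)))
    (fun x => cexp (-I * ((⟪x, ξ⟫ : ℝ) : ℂ)) * f x) (2 * π)
  have hconst : (2 * π) ^ (-(n : ℝ) / 2) = (2 * π) ^ ((n : ℝ) / 2) * |((2 * π) ^ n)⁻¹| := by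
    rw [abs_of_pos (by positivity), ← Real.rpow_natCast, ← Real.rpow_neg (by positivity),
      ← Real.rpow_add (by positivity)]
    ring_nf
  rw [finrank_euclideanSpace_fin] at hscale
  rw [FT, hconst, mul_smul, ← hscale, ← integral_smul, SchwartzMap.fourier_coe, Real.fourier_eq']
  congr 1 with x
  rw [angularDilation_apply, real_inner_smul_left, smul_eq_mul, real_smul, mul_left_comm]
  congr 3
  push_cast
  ring

lemma weightedSq_angularDilation_le {δ : ℝ} (hδ : 0 ≤ δ)
    (f : 𝓢(EuclideanSpace ℝ (Fin n), ℂ)) :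
    weightedSq δ (angularDilation f) ≤ weightedSq δ f := by
  have hconst : ‖(((2 * π) ^ ((n : ℝ) / 2) : ℝ) : ℂ)‖ₑ ^ 2 * .ofReal |((2 * π) ^ n)⁻¹| = 1 := by
    rw [← ofReal_norm, Complex.norm_real, Real.norm_of_nonneg (by positivity),
      ← ENNReal.ofReal_pow (by positivity), ← ENNReal.ofReal_mul (by positivity),
      abs_of_pos (by positivity), ← Real.rpow_mul_natCast (by positivity), Nat.cast_ofNat,
      div_mul_cancel₀ _ two_ne_zero, Real.rpow_natCast, mul_inv_cancel₀ (by positivity),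
      ENNReal.ofReal_one]
  calc weightedSq δ (angularDilation f)
      = ‖(((2 * π) ^ ((n : ℝ) / 2) : ℝ) : ℂ)‖ₑ ^ 2 * weightedSq δ fun x => f ((2 * π) • x) :=
        weightedSq_const_mul δ _ _
    _ ≤ ‖(((2 * π) ^ ((n : ℝ) / 2) : ℝ) : ℂ)‖ₑ ^ 2 *
          (.ofReal |((2 * π) ^ n)⁻¹| * weightedSq δ f) := by
        gcongr
        simpa only [finrank_euclideanSpace_fin] using
          weightedSq_comp_smul_le hδ (by linarith [pi_gt_three]) f
    _ = weightedSq δ f := by rw [← mul_assoc, hconst, one_mul]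

lemma integral_IFT_mul {F G : EuclideanSpace ℝ (Fin n) → ℂ} (hF : Integrable F)
    (hG : Integrable G) : ∫ x, IFT n F x * G x = ∫ ξ, F ξ * IFT n G ξ := by
  have hprod : Integrable fun z : EuclideanSpace ℝ (Fin n) × EuclideanSpace ℝ (Fin n) =>
      cexp (I * ((⟪z.1, z.2⟫ : ℝ) : ℂ)) * (G z.1 * F z.2) := by
    have hcont : Continuous fun z : EuclideanSpace ℝ (Fin n) × EuclideanSpace ℝ (Fin n) =>
        cexp (I * ((⟪z.1, z.2⟫ : ℝ) : ℂ)) := by fun_prop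
    exact (hG.mul_prod hF).bdd_mul hcont.aestronglyMeasurable
      (.of_forall fun z => (norm_exp_I_mul_ofReal _).le)
  calc ∫ x, IFT n F x * G x
      = ((2 * π) ^ (-(n : ℝ) / 2) : ℝ) •
          ∫ x, ∫ ξ, cexp (I * ((⟪x, ξ⟫ : ℝ) : ℂ)) * (G x * F ξ) := by
        simp only [IFT, smul_mul_assoc, ← integral_mul_const, ← integral_smul]
        congr! 5
        ring
    _ = ((2 * π) ^ (-(n : ℝ) / 2) : ℝ) •
          ∫ ξ, ∫ x, cexp (I * ((⟪x, ξ⟫ : ℝ) : ℂ)) * (G x * F ξ) := by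
        rw [integral_integral_swap hprod]
    _ = ∫ ξ, F ξ * IFT n G ξ := by
        simp only [IFT, mul_smul_comm, ← integral_const_mul, ← integral_smul]
        congr! 5 with ξ
        rw [real_inner_comm]
        ring

lemma conj_FT (f : EuclideanSpace ℝ (Fin n) → ℂ) (ξ : EuclideanSpace ℝ (Fin n)) :
    starRingEnd ℂ (FT n f ξ) = IFT n (fun x => starRingEnd ℂ (f x)) ξ := by
  rw [FT, IFT, real_smul, map_mul, conj_ofReal, ← integral_conj, ← real_smul]
  congr 2 with x
  rw [map_mul, ← exp_conj, map_mul, map_neg, conj_I, neg_neg, conj_ofReal, real_inner_comm]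

lemma integral_IFT_mul_conj {F f : EuclideanSpace ℝ (Fin n) → ℂ} (hF : Integrable F)
    (hf : Integrable f) :
    ∫ x, IFT n F x * starRingEnd ℂ (f x) = ∫ ξ, F ξ * starRingEnd ℂ (FT n f ξ) := by
  have hf' : Integrable fun x => starRingEnd ℂ (f x) :=
    conjCLE.toContinuousLinearMap.integrable_comp hf
  simp only [conj_FT, integral_IFT_mul hF hf']

end Normalization

section ResolventSymbol

variable {E : Type*} [NormedAddCommGroup E]

section NormedSpace

variable [NormedSpace ℝ E]

/-- The symbol `|∇p(ξ)| (z - p(ξ))⁻¹` with `z = lam + iεη`, where `ε = ±1` chooses the side of the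
real axis. -/
def gradResolventSymbol (p : E → ℝ) (lam η ε : ℝ) (ξ : E) : ℂ :=
  ((‖fderiv ℝ p ξ‖ : ℝ) : ℂ) * (((lam : ℂ) + (ε : ℂ) * (η : ℂ) * I) - ((p ξ : ℝ) : ℂ))⁻¹

lemma enorm_im_gradResolventSymbol_mul_conj (p : E → ℝ) (lam : ℝ) {η ε : ℝ} (hη : 0 ≤ η)
    (hε : ε = 1 ∨ ε = -1) (ξ : E) (z : ℂ) :
    ‖(gradResolventSymbol p lam η ε ξ * z * starRingEnd ℂ z).im‖ₑ =
      poissonWeight p lam η ξ * ‖z‖ₑ ^ 2 := by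
  have hsq : ‖(‖z‖ ^ 2 : ℝ)‖ₑ = ‖z‖ₑ ^ 2 := by rw [enorm_pow, enorm_norm]
  rw [mul_assoc, mul_conj, im_mul_ofReal, enorm_mul, normSq_eq_norm_sq, hsq,
    Real.enorm_eq_ofReal_abs, gradResolventSymbol,
    abs_im_ofReal_mul_resolvent hε (norm_nonneg _) hη, poissonWeight]

lemma norm_gradResolventSymbol_le (p : E → ℝ) (lam : ℝ) {η ε : ℝ} (hη : 0 < η)
    (hε : ε = 1 ∨ ε = -1) (ξ : E) : ‖gradResolventSymbol p lam η ε ξ‖ ≤ ‖fderiv ℝ p ξ‖ * η⁻¹ := by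
  rw [gradResolventSymbol, norm_mul, Complex.norm_real, norm_norm]
  gcongr
  exact norm_resolvent_le hε hη lam (p ξ)

lemma measurable_gradResolventSymbol [MeasurableSpace E] [OpensMeasurableSpace E] {p : E → ℝ}
    (hp : Measurable p) (lam η ε : ℝ) :
    Measurable (gradResolventSymbol p lam η ε) := by
  unfold gradResolventSymbol
  exact (measurable_fderiv ℝ p).norm.complex_ofReal.mul (hp.complex_ofReal.const_sub _).inv

end NormedSpace

variable [InnerProductSpace ℝ E] [FiniteDimensional ℝ E] [MeasurableSpace E] [BorelSpace E]

lemma integrable_norm_rpow_mul_schwartz [Nontrivial E] {s : ℝ}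
    (hs : -(Module.finrank ℝ E : ℝ) < s) (g : 𝓢(E, ℂ)) :
    Integrable fun ξ => ‖ξ‖ ^ s * ‖g ξ‖ := by
  have hmeas : AEStronglyMeasurable fun ξ => ‖ξ‖ ^ s * ‖g ξ‖ :=
    (measurable_norm.pow_const s).aestronglyMeasurable.mul g.continuous.norm.aestronglyMeasurable
  rw [← integrableOn_univ, ← Set.union_compl_self (Metric.ball (0 : E) 1)]
  refine IntegrableOn.union ?_ ?_
  · obtain ⟨C, hC⟩ := g.decay 0 0
    refine integrableOn_ball_of_norm_le_rpow (C := C) (α := -s) Module.finrank_pos (by linarith)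
      (.of_forall fun ξ => ?_) hmeas
    have hg : ‖g ξ‖ ≤ C := by simpa using hC.2 ξ
    rw [neg_neg, norm_mul, norm_norm, Real.norm_of_nonneg (by positivity), mul_comm]
    gcongr
  · refine (g.integrable_pow_mul volume ⌈s⌉₊).integrableOn.mono' hmeas.restrict ?_
    refine ae_restrict_of_forall_mem Metric.isOpen_ball.measurableSet.compl fun ξ hξ => ?_
    have hξ1 : 1 ≤ ‖ξ‖ := by simpa using hξ
    rw [norm_mul, norm_norm, Real.norm_of_nonneg (by positivity), ← Real.rpow_natCast]
    gcongr
    exact Nat.le_ceil s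

lemma PosHomogeneous.integrable_gradResolventSymbol_mul [Nontrivial E] {m : ℝ}
    (hm : 1 - (Module.finrank ℝ E : ℝ) < m) {p : E → ℝ} (hp : PosHomogeneous m p)
    (hp1 : ContDiffOn ℝ 1 p {0}ᶜ) (lam : ℝ) {η ε : ℝ} (hη : 0 < η) (hε : ε = 1 ∨ ε = -1)
    (g : 𝓢(E, ℂ)) :
    Integrable fun ξ => gradResolventSymbol p lam η ε ξ * g ξ := by
  obtain ⟨M, hM⟩ := hp.exists_norm_fderiv_le hp1
  have hp_meas : Measurable p := measurable_of_continuousOn_compl_singleton 0 hp1.continuousOn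
  refine ((integrable_norm_rpow_mul_schwartz (s := m - 1) (by linarith) g).const_mul
    (M * η⁻¹)).mono' ((measurable_gradResolventSymbol hp_meas lam η ε).aestronglyMeasurable.mul
      g.continuous.aestronglyMeasurable) ?_
  filter_upwards [Measure.ae_ne volume (0 : E)] with ξ hξ
  calc ‖gradResolventSymbol p lam η ε ξ * g ξ‖
      ≤ ‖fderiv ℝ p ξ‖ * η⁻¹ * ‖g ξ‖ := by
        rw [norm_mul]
        gcongr
        exact norm_gradResolventSymbol_le p lam hη hε ξ
    _ ≤ M * ‖ξ‖ ^ (m - 1) * η⁻¹ * ‖g ξ‖ := by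
        gcongr
        exact hM ξ hξ
    _ = M * η⁻¹ * (‖ξ‖ ^ (m - 1) * ‖g ξ‖) := by ring

end ResolventSymbol

section Bound

lemma PosHomogeneous.exists_lintegral_poissonWeight_mul_enorm_sq_fourier_le {E : Type*}
    [NormedAddCommGroup E] [InnerProductSpace ℝ E] [FiniteDimensional ℝ E] [MeasurableSpace E]
    [BorelSpace E] [Nontrivial E] {m : ℝ} {p : E → ℝ} (hp : PosHomogeneous m p)
    (hp1 : ContDiffOn ℝ 1 p {0}ᶜ) (hgrad : ∀ ξ ≠ 0, fderiv ℝ p ξ ≠ 0) {δ : ℝ} (hδ : 1 / 2 < δ) :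
    ∃ K : ℝ≥0∞, K ≠ ⊤ ∧ ∀ lam η : ℝ, 0 < η → ∀ f : 𝓢(E, ℂ),
      ∫⁻ ξ, poissonWeight p lam η ξ * ‖𝓕 f ξ‖ₑ ^ 2 ≤ K * weightedSq δ f := by
  obtain ⟨N, hN⟩ := hp.exists_lintegral_poissonWeight_mul_le hp1 hgrad
  have htop := bracketTraceConst_ne_top hδ
  refine ⟨N * (.ofReal (2 * π) * bracketTraceConst δ), by finiteness, fun lam η hη f => ?_⟩
  calc ∫⁻ ξ, poissonWeight p lam η ξ * ‖𝓕 f ξ‖ₑ ^ 2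
      ≤ N * (.ofReal (2 * π) * ⨆ θ : Metric.sphere (0 : E) 1,
          lineSupIntegral (θ : E) fun ξ => ‖𝓕 f ξ‖ₑ ^ 2) := hN lam η hη _
    _ ≤ N * (.ofReal (2 * π) * (bracketTraceConst δ * weightedSq δ f)) := by
        gcongr
        exact iSup_le fun θ =>
          lineSupIntegral_enorm_sq_fourier_le (norm_eq_of_mem_sphere θ) hδ f
    _ = N * (.ofReal (2 * π) * bracketTraceConst δ) * weightedSq δ f := by simp only [mul_assoc]

lemma enorm_im_integral_le {α : Type*} [MeasurableSpace α] {μ : Measure α} {g : α → ℂ}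
    (hg : Integrable g μ) : ‖(∫ x, g x ∂μ).im‖ₑ ≤ ∫⁻ x, ‖(g x).im‖ₑ ∂μ := by
  have him : ∫ x, (g x).im ∂μ = (∫ x, g x ∂μ).im := imCLM.integral_comp_comm hg
  rw [← him]
  exact enorm_integral_le_lintegral_enorm _

variable {n : ℕ} {m : ℝ} {p : EuclideanSpace ℝ (Fin n) → ℝ}

lemma PosHomogeneous.enorm_im_integral_mult_mul_conj_le [Nontrivial (EuclideanSpace ℝ (Fin n))]
    (hm : 1 - (n : ℝ) < m) (hp : PosHomogeneous m p) (hp1 : ContDiffOn ℝ 1 p {0}ᶜ)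
    (lam : ℝ) {η ε : ℝ} (hη : 0 < η) (hε : ε = 1 ∨ ε = -1) (f : 𝓢(EuclideanSpace ℝ (Fin n), ℂ)) :
    ‖(∫ x, mult n (gradResolventSymbol p lam η ε) f x * starRingEnd ℂ (f x)).im‖ₑ ≤
      ∫⁻ ξ, poissonWeight p lam η ξ * ‖𝓕 (angularDilation f) ξ‖ₑ ^ 2 := by
  set g := 𝓕 (angularDilation f)
  have hFT : FT n f = g := (fourier_angularDilation f).symm
  have hint := hp.integrable_gradResolventSymbol_mul (by simpa using hm) hp1 lam hη hε g
  have hint' : Integrable fun ξ =>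
      gradResolventSymbol p lam η ε ξ * g ξ * starRingEnd ℂ (g ξ) := by
    obtain ⟨C, hC⟩ := g.decay 0 0
    refine hint.mul_bdd (c := C) (by fun_prop) (.of_forall fun ξ => ?_)
    simpa using hC.2 ξ
  simp only [mult, hFT]
  rw [integral_IFT_mul_conj hint f.integrable, hFT]
  exact (enorm_im_integral_le hint').trans_eq <| lintegral_congr fun ξ =>
    enorm_im_gradResolventSymbol_mul_conj p lam hη.le hε ξ (g ξ)

theorem imaginary_part_resolvent_bound_general (hn : 0 < n) (hm : 1 - (n : ℝ) < m) {δ : ℝ}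
    (hδ : 1 / 2 < δ) (hp : PosHomogeneous m p) (hp1 : ContDiffOn ℝ 1 p {0}ᶜ)
    (hgrad : ∀ ξ ≠ 0, fderiv ℝ p ξ ≠ 0) :
    ∃ C > 0, ∀ lam η : ℝ, 0 < η → ∀ ε : ℝ, ε = 1 ∨ ε = -1 →
      ∀ f : 𝓢(EuclideanSpace ℝ (Fin n), ℂ),
      |(∫ x, mult n (gradResolventSymbol p lam η ε) f x * starRingEnd ℂ (f x)).im| ≤
        C * (eLpNorm (fun x => (bracketPow δ x : ℂ) * f x) 2 volume).toReal ^ 2 := by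
  have : NeZero n := ⟨hn.ne'⟩
  obtain ⟨K, hK, hbound⟩ :=
    hp.exists_lintegral_poissonWeight_mul_enorm_sq_fourier_le hp1 hgrad hδ
  refine ⟨K.toReal + 1, by positivity, fun lam η hη ε hε f => ?_⟩
  have hle : ‖(∫ x, mult n (gradResolventSymbol p lam η ε) f x * starRingEnd ℂ (f x)).im‖ₑ ≤
      K * weightedSq δ f :=
    calc _ ≤ ∫⁻ ξ, poissonWeight p lam η ξ * ‖𝓕 (angularDilation f) ξ‖ₑ ^ 2 :=
          hp.enorm_im_integral_mult_mul_conj_le hm hp1 lam hη hε f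
      _ ≤ K * weightedSq δ (angularDilation f) := hbound lam η hη _
      _ ≤ K * weightedSq δ f := by
          gcongr
          exact weightedSq_angularDilation_le (by linarith) f
  calc _ = ‖_‖ₑ.toReal := (toReal_enorm _).symm
    _ ≤ (K * weightedSq δ f).toReal :=
        ENNReal.toReal_mono (ENNReal.mul_ne_top hK (weightedSq_schwartz_ne_top δ f)) hle
    _ = K.toReal * (eLpNorm (fun x => (bracketPow δ x : ℂ) * f x) 2 volume).toReal ^ 2 := by
        rw [ENNReal.toReal_mul, weightedSq_eq_eLpNorm_sq, ENNReal.toReal_pow]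
    _ ≤ _ := by
        gcongr
        exact le_add_of_nonneg_right zero_le_one

end Bound

theorem imaginary_part_resolvent_bound (n : ℕ) (hn : 2 ≤ n) (m : ℝ) (hm : 1 < m)
    (δ : ℝ) (hδ : 1 / 2 < δ)
    (a : EuclideanSpace ℝ (Fin n) → ℝ)
    (ha_cont : Continuous a)
    (ha_smooth : ContDiffOn ℝ (⊤ : ℕ∞) a {(0 : EuclideanSpace ℝ (Fin n))}ᶜ)
    (ha_hom : ∀ t : ℝ, 0 < t → ∀ ξ, a (t • ξ) = t * a ξ)
    (ha_pos : ∀ ξ : EuclideanSpace ℝ (Fin n), ξ ≠ 0 → 0 < a ξ) :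
    ∃ C > 0, ∀ lam η : ℝ, 0 < η → ∀ ε : ℝ, ε = 1 ∨ ε = -1 →
      ∀ f : SchwartzMap (EuclideanSpace ℝ (Fin n)) ℂ,
      |(∫ x : EuclideanSpace ℝ (Fin n),
          mult n (fun ξ =>
              ((‖fderiv ℝ (fun ζ' : EuclideanSpace ℝ (Fin n) => a ζ' ^ m) ξ‖ : ℝ) : ℂ) *
                (((lam : ℂ) + (ε : ℂ) * (η : ℂ) * Complex.I) - ((a ξ ^ m : ℝ) : ℂ))⁻¹)
            (fun y => f y) x * (starRingEnd ℂ) (f x)).im| ≤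
        C * (eLpNorm (fun x => ((Real.sqrt (1 + ‖x‖ ^ 2) ^ (δ) : ℝ) : ℂ) * f x) 2 volume).toReal ^ 2 := by
  have ha : PosHomogeneous 1 a := by simpa only [PosHomogeneous, rpow_one] using ha_hom
  have hp : PosHomogeneous m fun ξ => a ξ ^ m := by
    simpa only [one_mul] using ha.rpow (ha.nonneg_of_pos one_ne_zero ha_pos) m
  have hp1 : ContDiffOn ℝ 1 (fun ξ => a ξ ^ m) {0}ᶜ :=
    (ha_smooth.of_le (mod_cast le_top)).rpow_const_of_ne fun ξ hξ => (ha_pos ξ hξ).ne'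
  exact imaginary_part_resolvent_bound_general (by linarith) (by linarith [n.cast_nonneg (α := ℝ)])
    hδ hp hp1 fun _ => hp.fderiv_ne_zero (by linarith) hp1 fun ξ hξ =>
      (rpow_pos_of_pos (ha_pos ξ hξ) m).ne'
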